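/- arXiv:2307.12720 — 2 statements merged into one kernel-verified Lean document; each statement's English description precedes it below -/
import Mathlib

section
/- The exponential growth rate of the number of OT-admissible words equals the capacity of the OT constraint: lim_{m→∞} (log₂ N8(m))/m = log₂((5 + 3√5)/2), where (5 + 3√5)/2 is the largest root of x² − 5x − 5. -/
namespace OTLOCO


def B1 : Finset (Fin 8) := {0, 1, 4, 5}
def B2 : Finset (Fin 8) := {2, 3, 6, 7}

def OTpair (a b : Fin 8) : Prop :=
  (a = 2 ∧ b ∈ B1) ∨ (a ∈ B1 ∧ b = 2) ∨ (a = 5 ∧ b ∈ B2) ∨ (a ∈ B2 ∧ b = 5)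

def OTtriple (a x b : Fin 8) : Prop :=
  (a ∈ ({0, 1, 4} : Finset (Fin 8)) ∧ x ∈ ({3, 6} : Finset (Fin 8)) ∧
    b ∈ ({0, 1, 4} : Finset (Fin 8))) ∨
  (a ∈ ({3, 6, 7} : Finset (Fin 8)) ∧ x ∈ ({1, 4} : Finset (Fin 8)) ∧
    b ∈ ({3, 6, 7} : Finset (Fin 8)))

instance (a b : Fin 8) : Decidable (OTpair a b) := by unfold OTpair; infer_instance
instance (a x b : Fin 8) : Decidable (OTtriple a x b) := by unfold OTtriple; infer_instance

def OTadm {m : ℕ} (w : Fin m → Fin 8) : Prop :=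
  (∀ i j : Fin m, (j : ℕ) = (i : ℕ) + 1 → ¬ OTpair (w i) (w j)) ∧
  (∀ i j k : Fin m, (j : ℕ) = (i : ℕ) + 1 → (k : ℕ) = (i : ℕ) + 2 →
    ¬ OTtriple (w i) (w j) (w k))

instance {m : ℕ} : DecidablePred (@OTadm m) := fun w => by
  unfold OTadm; infer_instance

/-- Number of OT-admissible words of length \`m\`. -/
def N8 (m : ℕ) : ℕ :=
  if m = 0 then 2
  else (Finset.univ.filter (fun w : Fin m → Fin 8 => OTadm w)).card

lemma adm_iff {n : ℕ} (a x y : Fin 8) (w : Fin n → Fin 8) :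
    OTadm (Fin.cons a (Fin.cons x (Fin.cons y w : Fin (n+1) → Fin 8) : Fin (n+2) → Fin 8) : Fin (n+3) → Fin 8) ↔
    ¬ OTpair a x ∧ ¬ OTtriple a x y ∧
      OTadm (Fin.cons x (Fin.cons y w : Fin (n+1) → Fin 8) : Fin (n+2) → Fin 8) := by
  constructor
  · rintro ⟨h1, h2⟩
    refine ⟨h1 0 1 rfl, h2 0 1 2 rfl rfl, ?_, ?_⟩
    · intro i j h
      have := h1 i.succ j.succ (by simp [h])
      simpa only [Fin.cons_succ] using this
    · intro i j k h h'
      have := h2 i.succ j.succ k.succ (by simp [h]) (by simp [h'])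
      simpa only [Fin.cons_succ] using this
  · rintro ⟨hp, ht, h1, h2⟩
    constructor
    · intro i j h
      obtain ⟨j, rfl⟩ : ∃ j', j = Fin.succ j' := Fin.exists_succ_eq.2 (by rintro rfl; simp at h) |>.imp fun _ h => h.symm
      refine Fin.cases (fun h => ?_) (fun i h => ?_) i h
      · have : j = 0 := by ext; simpa using h
        subst this
        exact hp
      · simp only [Fin.cons_succ]
        exact h1 i j (by simpa using h)
    · intro i j k h h'
      obtain ⟨j, rfl⟩ : ∃ j', j = Fin.succ j' := Fin.exists_succ_eq.2 (by rintro rfl; simp at h) |>.imp fun _ h => h.symm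
      obtain ⟨k, rfl⟩ : ∃ j', k = Fin.succ j' := Fin.exists_succ_eq.2 (by rintro rfl; simp at h') |>.imp fun _ h => h.symm
      refine Fin.cases (fun h h' => ?_) (fun i h h' => ?_) i h h'
      · have : j = 0 := by ext; simpa using h
        subst this
        have : k = 1 := by ext; simpa using h'
        subst this
        exact ht
      · simp only [Fin.cons_succ]
        exact h2 i j k (by simpa using h) (by simp at h'; omega)

def cnt (n : ℕ) (a x : Fin 8) : ℕ :=
  ∑ w : Fin n → Fin 8, if OTadm (Fin.cons a (Fin.cons x w : Fin (n+1) → Fin 8) : Fin (n+2) → Fin 8) then 1 else 0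

lemma sum_cons {n : ℕ} (f : (Fin (n+1) → Fin 8) → ℕ) :
    ∑ w, f w = ∑ a : Fin 8, ∑ w : Fin n → Fin 8, f (Fin.cons a w) := by
  rw [← Fintype.sum_prod_type']
  exact (Fintype.sum_equiv (Fin.consEquiv (fun _ : Fin (n+1) => Fin 8)) _ _ (fun _ => rfl)).symm

lemma cnt_succ (n : ℕ) (a x : Fin 8) :
    cnt (n+1) a x = ∑ y : Fin 8, if ¬ OTpair a x ∧ ¬ OTtriple a x y then cnt n x y else 0 := by
  unfold cnt
  rw [sum_cons]
  refine Finset.sum_congr rfl fun y _ => ?_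
  split_ifs with h
  · refine Finset.sum_congr rfl fun w _ => ?_
    simp [adm_iff, h]
  · refine Finset.sum_eq_zero fun w _ => ?_
    rw [if_neg]
    rw [adm_iff]
    tauto

def stuck (a x : Fin 8) : Prop :=
  x = 5 ∨ x = 2 ∨ (a ∈ ({0, 1, 4} : Finset (Fin 8)) ∧ x ∈ ({3, 6} : Finset (Fin 8))) ∨
    (a ∈ ({3, 6, 7} : Finset (Fin 8)) ∧ x ∈ ({1, 4} : Finset (Fin 8)))

instance (a x : Fin 8) : Decidable (stuck a x) := by unfold stuck; infer_instance

def fs : ℕ → ℕ × ℕ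
  | 0 => (1, 1)
  | n+1 => (4 * (fs n).1 + 3 * (fs n).2, 3 * (fs n).1 + (fs n).2)

lemma cards : ∀ a x : Fin 8, ¬ OTpair a x →
    (Finset.univ.filter fun y => (¬ OTpair x y ∧ ¬ OTtriple a x y) ∧ ¬ stuck x y).card
      = (if stuck a x then 3 else 4) ∧
    (Finset.univ.filter fun y => (¬ OTpair x y ∧ ¬ OTtriple a x y) ∧ stuck x y).card
      = (if stuck a x then 1 else 3) := by
  decide

lemma sum_two (P Q : Fin 8 → Prop) [DecidablePred P] [DecidablePred Q] (f s : ℕ) :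
    (∑ y, if P y then (if Q y then s else f) else 0) =
      (Finset.univ.filter fun y => P y ∧ ¬ Q y).card * f +
      (Finset.univ.filter fun y => P y ∧ Q y).card * s := by
  rw [Finset.card_filter, Finset.card_filter, Finset.sum_mul, Finset.sum_mul,
    ← Finset.sum_add_distrib]
  refine Finset.sum_congr rfl fun y _ => ?_
  by_cases hP : P y <;> by_cases hQ : Q y <;> simp [hP, hQ]

lemma pair_iff (a x : Fin 8) (w : Fin 0 → Fin 8) :
    OTadm (Fin.cons a (Fin.cons x w : Fin 1 → Fin 8) : Fin 2 → Fin 8) ↔ ¬ OTpair a x := by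
  constructor
  · intro h
    exact h.1 0 1 rfl
  · intro h
    refine ⟨fun i j hij => ?_, fun i j k _ hk => by omega⟩
    have hi : i = 0 := by ext; simp; omega
    have hj : j = 1 := by ext; simp; omega
    subst hi hj
    exact h

lemma cnt_eq (n : ℕ) : ∀ a x : Fin 8,
    cnt n a x = if ¬ OTpair a x then (if stuck a x then (fs n).2 else (fs n).1) else 0 := by
  induction n with
  | zero =>
    intro a x
    simp [cnt, pair_iff, fs]
  | succ n ih =>
    intro a x
    rw [cnt_succ]
    by_cases h : OTpair a x
    · simp [h]
    · have h3 : ∀ y, (if ¬ OTpair a x ∧ ¬ OTtriple a x y then cnt n x y else 0) =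
          if (¬ OTpair x y ∧ ¬ OTtriple a x y) then (if stuck x y then (fs n).2 else (fs n).1) else 0 := by
        intro y
        rw [ih]
        by_cases h1 : OTtriple a x y <;> by_cases h2 : OTpair x y <;> simp [h, h1, h2]
      rw [Finset.sum_congr rfl fun y _ => h3 y, sum_two, (cards a x h).1, (cards a x h).2, if_pos h]
      split_ifs <;> simp [fs]

lemma N8_eq (n : ℕ) : N8 (n+2) = 30 * (fs n).1 + 20 * (fs n).2 := by
  have : N8 (n+2) = ∑ a, ∑ x, cnt n a x := by
    unfold N8 cnt
    rw [if_neg (by omega), Finset.card_filter, sum_cons]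
    refine Finset.sum_congr rfl fun a _ => ?_
    rw [sum_cons]
  rw [this]
  simp_rw [cnt_eq, sum_two, Finset.sum_add_distrib, ← Finset.sum_mul]
  congr 2

lemma N8_bound (n : ℕ) (l : ℝ) (h0 : 5 < l) (h1 : l < 6) (hl : l ^ 2 = 5 * l + 5) :
    l ^ (n+2) ≤ N8 (n+2) ∧ (N8 (n+2) : ℝ) ≤ 50 * l ^ (n + 2) := by
  have key : (l - 1) * (fs n).1 + 3 * ((fs n).2 : ℝ) = (l + 2) * l ^ n := by
    induction n with
    | zero => simp [fs]; ring
    | succ n ih =>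
      simp only [fs]
      push_cast
      rw [pow_succ, ← mul_assoc, ← ih]
      linear_combination (-(fs n).1 : ℝ) * hl
  rw [N8_eq, pow_add, hl]
  push_cast
  have hp : 0 < l ^ n := by positivity
  have hf : (0:ℝ) ≤ (fs n).1 := by positivity
  have hs : (0:ℝ) ≤ (fs n).2 := by positivity
  constructor
  · nlinarith
  · nlinarith

theorem ot_capacity :
    Filter.Tendsto (fun m : ℕ => Real.logb 2 (N8 m) / (m : ℝ)) Filter.atTop
      (nhds (Real.logb 2 ((5 + 3 * Real.sqrt 5) / 2))) ∧
    ((5 + 3 * Real.sqrt 5) / 2) ^ 2 - 5 * ((5 + 3 * Real.sqrt 5) / 2) - 5 = 0 ∧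
    (∀ x : ℝ, x ^ 2 - 5 * x - 5 = 0 → x ≤ (5 + 3 * Real.sqrt 5) / 2) := by
  have h5 : Real.sqrt 5 ^ 2 = 5 := Real.sq_sqrt (by norm_num)
  have hs0 : 0 ≤ Real.sqrt 5 := Real.sqrt_nonneg 5
  have hlo : 2 < Real.sqrt 5 := by nlinarith
  have hhi : Real.sqrt 5 < 7 / 3 := by nlinarith
  refine ⟨?_, by linear_combination (9 / 4) * h5, ?_⟩
  · set l : ℝ := (5 + 3 * Real.sqrt 5) / 2 with hldef
    have hl : l ^ 2 = 5 * l + 5 := by rw [hldef]; linear_combination (9 / 4) * h5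
    have l0 : 5 < l := by rw [hldef]; linarith
    have l1 : l < 6 := by rw [hldef]; linarith
    have hup : Filter.Tendsto (fun m : ℕ => Real.logb 2 50 / (m : ℝ) + Real.logb 2 l)
        Filter.atTop (nhds (Real.logb 2 l)) := by
      simpa using (tendsto_const_div_atTop_nhds_zero_nat (Real.logb 2 50)).add_const (Real.logb 2 l)
    refine tendsto_of_tendsto_of_tendsto_of_le_of_le' tendsto_const_nhds hup ?_ ?_
    · filter_upwards [Filter.eventually_ge_atTop 2] with m hm
      obtain ⟨n, rfl⟩ := Nat.exists_eq_add_of_le' hm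
      have hp : 0 < l ^ (n+2) := by positivity
      rw [le_div_iff₀ (by positivity), mul_comm, ← Real.logb_pow]
      exact Real.logb_le_logb_of_le (by norm_num) hp (N8_bound n l l0 l1 hl).1
    · filter_upwards [Filter.eventually_ge_atTop 2] with m hm
      obtain ⟨n, rfl⟩ := Nat.exists_eq_add_of_le' hm
      have hp : 0 < l ^ (n+2) := by positivity
      have hb := N8_bound n l l0 l1 hl
      have hm0 : ((n + 2 : ℕ) : ℝ) ≠ 0 := by positivity
      rw [div_le_iff₀ (by positivity), add_mul, div_mul_cancel₀ _ hm0,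
        mul_comm (Real.logb 2 l), ← Real.logb_pow, ← Real.logb_mul (by norm_num) hp.ne']
      exact Real.logb_le_logb_of_le (by norm_num) (hp.trans_le hb.1) hb.2
  · intro x hx
    by_contra! h
    nlinarith

end OTLOCO
end

section
/- The normalized finite-length rate of the ST-LOCO coding scheme converges to its normalized capacity: lim_{m→∞} (1/3)·( (⌊log₂ N4(m)⌋ + 2)/(m + 3) + 1 ) = (1 + log₂(1 + √2))/3. -/
namespace STLOCO

/-- Forbidden 2-tuples of `ST⁴`, read left-to-right. -/
def STpair (a b : Fin 4) : Prop :=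
  (a = 0 ∧ b = 1) ∨ (a = 1 ∧ b = 0) ∨ (a = 1 ∧ b = 2) ∨
  (a = 2 ∧ b = 1) ∨ (a = 2 ∧ b = 3) ∨ (a = 3 ∧ b = 2)

/-- Forbidden 3-tuples of `ST⁴`, read left-to-right. -/
def STtriple (a x b : Fin 4) : Prop :=
  (a = 0 ∧ x = 3 ∧ b = 0) ∨ (a = 3 ∧ x = 0 ∧ b = 3)

instance (a b : Fin 4) : Decidable (STpair a b) := by unfold STpair; infer_instance
instance (a x b : Fin 4) : Decidable (STtriple a x b) := by unfold STtriple; infer_instance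

/-- A word `w : Fin m → Fin 4` (index `0` is the leftmost symbol) is ST-admissible. -/
def STadm {m : ℕ} (w : Fin m → Fin 4) : Prop :=
  (∀ i j : Fin m, (j : ℕ) = (i : ℕ) + 1 → ¬ STpair (w i) (w j)) ∧
  (∀ i j k : Fin m, (j : ℕ) = (i : ℕ) + 1 → (k : ℕ) = (i : ℕ) + 2 →
    ¬ STtriple (w i) (w j) (w k))

instance {m : ℕ} : DecidablePred (@STadm m) := fun w => by
  unfold STadm; infer_instance

/-- Number of ST-admissible words of length `m`, with the convention `N4 0 = 2`. -/
def N4 (m : ℕ) : ℕ :=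
  if m = 0 then 2
  else (Finset.univ.filter (fun w : Fin m → Fin 4 => STadm w)).card
/-- Number of admissible words with prescribed first two symbols. -/
def CC (m : ℕ) (a b : Fin 4) : ℕ :=
  ∑ w : Fin m → Fin 4,
    if STadm (Fin.cons a (Fin.cons b w : Fin (m+1) → Fin 4) : Fin (m+2) → Fin 4) then 1 else 0

lemma adm_cons {m : ℕ} (a : Fin 4) (v : Fin (m+2) → Fin 4) :
    STadm (Fin.cons a v : Fin (m+3) → Fin 4) ↔
      ¬ STpair a (v 0) ∧ ¬ STtriple a (v 0) (v 1) ∧ STadm v := by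
  constructor
  · rintro ⟨h1, h2⟩
    refine ⟨?_, ?_, ?_, ?_⟩
    · exact h1 0 (Fin.succ 0) (by simp)
    · exact h2 0 (Fin.succ 0) (Fin.succ 1) (by simp) (by simp)
    · intro i j hij
      exact h1 i.succ j.succ (by simp [hij])
    · intro i j k hij hik
      exact h2 i.succ j.succ k.succ (by simp [hij]) (by simp [hik])
  · rintro ⟨h1, h2, h3, h4⟩
    constructor
    · intro i j hij
      induction j using Fin.cases with
      | zero => simp at hij
      | succ j =>
        induction i using Fin.cases with
        | zero =>
          have : j = 0 := by ext; simpa using hij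
          subst this
          exact h1
        | succ i => exact h3 i j (by simpa using hij)
    · intro i j k hij hik
      induction j using Fin.cases with
      | zero => simp at hij
      | succ j =>
        induction k using Fin.cases with
        | zero => simp at hik
        | succ k =>
          induction i using Fin.cases with
          | zero =>
            have : j = 0 := by ext; simpa using hij
            subst this
            have : k = 1 := by ext; simpa using hik
            subst this
            exact h2
          | succ i =>
            exact h4 i j k (by simpa using hij) (by simp at hik; omega)

lemma sum_cons (m : ℕ) (f : (Fin (m+1) → Fin 4) → ℕ) :
    ∑ w, f w = ∑ c : Fin 4, ∑ w : Fin m → Fin 4, f (Fin.cons c w) := by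
  rw [← Fintype.sum_prod_type' (f := fun c w => f (Fin.cons c w))]
  exact ((Fin.consEquiv (fun _ : Fin (m+1) => Fin 4)).sum_comp f).symm

lemma CC_zero (a b : Fin 4) : CC 0 a b = if STpair a b then 0 else 1 := by
  revert a b; decide

lemma CC_succ (m : ℕ) (a b : Fin 4) : CC (m+1) a b =
    ∑ c : Fin 4, if ¬ STpair a b ∧ ¬ STtriple a b c then CC m b c else 0 := by
  unfold CC
  rw [sum_cons]
  refine Finset.sum_congr rfl fun c _ => ?_
  have h : ∀ w : Fin m → Fin 4, STadm (Fin.cons a (Fin.cons b (Fin.cons c w : Fin (m+1) → Fin 4) : Fin (m+2) → Fin 4) : Fin (m+3) → Fin 4) ↔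
      ¬ STpair a b ∧ ¬ STtriple a b c ∧ STadm (Fin.cons b (Fin.cons c w : Fin (m+1) → Fin 4) : Fin (m+2) → Fin 4) := fun w => adm_cons a _
  by_cases h1 : STpair a b <;> by_cases h2 : STtriple a b c <;> simp [h, h1, h2]

/-- The pair of sequences governing the count. -/
def PR : ℕ → ℕ × ℕ
  | 0 => (1, 1)
  | m+1 => ((PR m).1 + 2 * (PR m).2, (PR m).1 + (PR m).2)

lemma CC_eq (m : ℕ) (a b : Fin 4) : CC m a b =
    if STpair a b then 0
    else if (a = 0 ∧ b = 0) ∨ (a = 2 ∧ b = 0) ∨ (a = 3 ∧ b = 3) ∨ (a = 1 ∧ b = 3) then (PR m).1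
    else (PR m).2 := by
  induction m generalizing a b with
  | zero => rw [CC_zero]; simp [PR]
  | succ m ih =>
    rw [CC_succ]
    simp only [ih, Fin.sum_univ_four, PR]
    fin_cases a <;> fin_cases b <;> simp [STpair, STtriple] <;> ring

lemma N4_eq (m : ℕ) : N4 (m+2) = 4 * (PR m).1 + 6 * (PR m).2 := by
  have : N4 (m+2) = ∑ a : Fin 4, ∑ b : Fin 4, CC m a b := by
    unfold N4 CC
    rw [if_neg (by omega), Finset.card_filter, sum_cons]
    refine Finset.sum_congr rfl fun c _ => ?_
    rw [sum_cons]
  rw [this]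
  simp only [CC_eq, Fin.sum_univ_four]
  simp [STpair]
  ring

lemma PR_eq (m : ℕ) : ((PR m).1 : ℝ) + Real.sqrt 2 * (PR m).2 = (1 + Real.sqrt 2)^(m+1) := by
  have h2 : Real.sqrt 2 * Real.sqrt 2 = 2 := Real.mul_self_sqrt (by norm_num)
  induction m with
  | zero => simp [PR]
  | succ m ih =>
    rw [pow_succ, ← ih]
    simp only [PR]
    push_cast
    linear_combination (-((PR m).2 : ℝ)) * h2

lemma log_bounds (m : ℕ) :
    ((m:ℝ)+1) * Real.logb 2 (1 + Real.sqrt 2) - 1 ≤ (Nat.log 2 (N4 (m+2)) : ℝ) ∧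
    (Nat.log 2 (N4 (m+2)) : ℝ) ≤ ((m:ℝ)+1) * Real.logb 2 (1 + Real.sqrt 2) + 3 := by
  have hs1 : (1:ℝ) ≤ Real.sqrt 2 := by
    rw [Real.one_le_sqrt]; norm_num
  have hs2 : Real.sqrt 2 ≤ 2 := by
    rw [Real.sqrt_le_left (by norm_num)]; norm_num
  have hp := PR_eq m
  have hN := N4_eq m
  have hNr : (N4 (m+2) : ℝ) = 4 * (PR m).1 + 6 * (PR m).2 := by exact_mod_cast hN
  have h1 : (0:ℝ) ≤ (PR m).1 := by positivity
  have h2 : (0:ℝ) ≤ (PR m).2 := by positivity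
  have hpos : (0:ℝ) < (1 + Real.sqrt 2)^(m+1) := by positivity
  have lo : (1 + Real.sqrt 2)^(m+1) ≤ (N4 (m+2) : ℝ) := by nlinarith
  have hi : (N4 (m+2) : ℝ) ≤ 2^3 * (1 + Real.sqrt 2)^(m+1) := by nlinarith
  have hNpos : (0:ℝ) < N4 (m+2) := lt_of_lt_of_le hpos lo
  have hN0 : N4 (m+2) ≠ 0 := by
    intro h; rw [h] at hNpos; simp at hNpos
  have e : Real.logb 2 ((1 + Real.sqrt 2)^(m+1)) = ((m:ℝ)+1) * Real.logb 2 (1 + Real.sqrt 2) := by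
    rw [Real.logb_pow]; push_cast; ring
  have e3 : Real.logb 2 ((2:ℝ)^3) = 3 := by
    rw [Real.logb_pow, Real.logb_self_eq_one (by norm_num)]; norm_num
  constructor
  · have a1 : (N4 (m+2) : ℝ) ≤ 2^(Nat.log 2 (N4 (m+2)) + 1) := by
      exact_mod_cast (Nat.lt_pow_succ_log_self (by norm_num) _).le
    have := Real.logb_le_logb_of_le (b := 2) (by norm_num) hpos (lo.trans a1)
    rw [e, Real.logb_pow, Real.logb_self_eq_one (by norm_num)] at this
    push_cast at this
    linarith
  · have a1 : (2:ℝ)^(Nat.log 2 (N4 (m+2))) ≤ (N4 (m+2) : ℝ) := by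
      exact_mod_cast Nat.pow_log_le_self 2 hN0
    have := Real.logb_le_logb_of_le (b := 2) (by norm_num) (by positivity) (a1.trans hi)
    rw [Real.logb_mul (by norm_num) hpos.ne', e, e3, Real.logb_pow,
      Real.logb_self_eq_one (by norm_num)] at this
    linarith

lemma frac_tendsto : Filter.Tendsto
    (fun m : ℕ => ((Nat.log 2 (N4 m) : ℝ) + 2) / ((m : ℝ) + 3)) Filter.atTop
    (nhds (Real.logb 2 (1 + Real.sqrt 2))) := by
  set L := Real.logb 2 (1 + Real.sqrt 2) with hL
  have t : ∀ c : ℝ, Filter.Tendsto (fun m : ℕ => L + c / ((m : ℝ) + 3)) Filter.atTop (nhds L) := by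
    intro c
    have h : Filter.Tendsto (fun m : ℕ => ((m : ℝ) + 3)) Filter.atTop Filter.atTop :=
      Filter.tendsto_atTop_add_const_right _ _ tendsto_natCast_atTop_atTop
    simpa using (h.const_div_atTop c).const_add L
  refine tendsto_of_tendsto_of_tendsto_of_le_of_le' (t (1 - 4 * L)) (t (5 - 4 * L)) ?_ ?_
  all_goals
    filter_upwards [Filter.eventually_ge_atTop 2] with n hn
    obtain ⟨m, rfl⟩ := Nat.exists_eq_add_of_le' hn
    obtain ⟨h1, h2⟩ := log_bounds m
    rw [← hL] at h1 h2
    have hm : (0:ℝ) < ((m+2 : ℕ) : ℝ) + 3 := by positivity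
    have hne := hm.ne'
    have e : ∀ c : ℝ, L + c / (((m+2 : ℕ) : ℝ) + 3) = (L * (((m+2 : ℕ) : ℝ) + 3) + c) / (((m+2 : ℕ) : ℝ) + 3) := by
      intro c
      rw [add_div, mul_div_cancel_right₀ _ hne]
    rw [e, div_le_div_iff_of_pos_right hm]
    push_cast
    linarith

theorem st_loco_normalized_rate_tendsto :
    Filter.Tendsto
      (fun m : ℕ =>
        (1 / 3 : ℝ) * (((Nat.log 2 (N4 m) : ℝ) + 2) / ((m : ℝ) + 3) + 1))
      Filter.atTop
      (nhds ((1 + Real.logb 2 (1 + Real.sqrt 2)) / 3)) := by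
  have h := (frac_tendsto.add_const 1).const_mul (1 / 3 : ℝ)
  have e : (1 + Real.logb 2 (1 + Real.sqrt 2)) / 3 =
      1 / 3 * (Real.logb 2 (1 + Real.sqrt 2) + 1) := by ring
  rw [e]
  exact h

end STLOCO
end
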